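/- For all integers a, b ≥ 0, the following identity holds in the Laurent polynomial ring ℤ[x, x⁻¹, y, y⁻¹]: (x y − x⁻¹ y² − x⁴ y⁻¹ + x⁻⁴ y³ + x⁵ y⁻² − x⁻⁵ y³ − x⁵ y⁻³ + x⁻⁵ y² + x⁴ y⁻³ − x⁻⁴ y − x y⁻² + x⁻¹ y⁻¹) · Σ_{T ∈ S_G2(a,b)} x^{n_1(T) − n_2(T) + 2 n_3(T) − 2 n_5(T) + n_6(T) − n_7(T)} y^{n_2(T) − n_3(T) + n_5(T) − n_6(T)} = x^{a+1} y^{b+1} − x^{−(a+1)} y^{a+b+2} − x^{a+3b+4} y^{−(b+1)} + x^{−(a+3b+4)} y^{a+2b+3} + x^{2a+3b+5} y^{−(a+b+2)} − x^{−(2a+3b+5)} y^{a+2b+3} − x^{2a+3b+5} y^{−(a+2b+3)} + x^{−(2a+3b+5)} y^{a+b+2} + x^{a+3b+4} y^{−(a+2b+3)} − x^{−(a+3b+4)} y^{b+1} − x^{a+1} y^{−(a+b+2)} + x^{−(a+1)} y^{−(b+1)}. (By the Weyl character formula, this says that the weight generating function of S_G2(a,b) is the Weyl character of the irreducible representation of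 the simple Lie algebra G2 with highest weight a ω_α + b ω_β, written in the variables x = e^{ω_α}, y = e^{ω_β}.) -/

import Mathlib

/-!
Read from left to right, a `G2`-semistandard tableau is a path in a directed graph whose vertices
are the seven entries (for the columns of length one) and the fourteen admissible columns of length
two: except for the bounds on entries, every condition defining `SG2` concerns two neighbouring
columns, or follows from such conditions (`mem_rows`, `mem_tabs`, `SG2_eq`). Hence the weight
generating function, restricted to tableaux whose first column lies in a prescribed set, satisfies
a linear recursion in the numbers `a` and `b` of columns (`rowGF_succ`, `tabGF_succ`).

The graph has only simple loops and is otherwise triangular. The entries `1, 2, 3, 5, 6, 7` carry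
loops and their weights are the six short roots; the columns `(1, 2)`, `(1, 3)`, `(2, 5)`, `(3, 6)`,
`(5, 7)`, `(6, 7)` carry loops and their weights are the six long roots. The allowed successors of
any column of length two are the successors of one of these six. So every generating function is a
linear combination of `λ ^ b * μ ^ a` with `λ` a long and `μ` a short root; these pairs are the
images of the two fundamental weights under Weyl group elements. After multiplication by suitable
factors `1 - e^{-α}` of the Weyl denominator the coefficients become Laurent polynomials, which are
written out in `row7`, …, `row1` (induction on `a`) and in `tab6`, …, `tab1` (induction on `b`).
The last of these, `tab1`, covers all tableaux, and up to the factor `x * y` it is the character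
formula.

The closed forms live in a field with nonzero elements `x`, `y`; they are transported to the Laurent
polynomial ring by embedding it into its field of fractions.
-/

/-- A filling of the shape with `b` columns of length two (each recorded as
(top entry, bottom entry)) followed by `a` columns of length one. -/
abbrev TabT (a b : ℕ) : Type := (Fin b → ℕ × ℕ) × (Fin a → ℕ)

/-- `n_k(T)`: the number of entries of the tableau `T` equal to `k`. -/
def nkOf {m n : ℕ} (T : (Fin m → ℕ × ℕ) × (Fin n → ℕ)) (k : ℕ) : ℕ :=
  (Finset.univ.filter fun j : Fin m => (T.1 j).1 = k).card +
    (Finset.univ.filter fun j : Fin m => (T.1 j).2 = k).card +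
    (Finset.univ.filter fun i : Fin n => T.2 i = k).card

/-- The set of `A2`-semistandard tableaux of shape `(a,b)`: entries from `{1,2,3}`,
rows weakly increasing, columns strictly increasing. -/
def SA2 (a b : ℕ) : Set (TabT a b) :=
  {T | (∀ j : Fin b, 1 ≤ (T.1 j).1 ∧ (T.1 j).1 ≤ 3 ∧ 1 ≤ (T.1 j).2 ∧ (T.1 j).2 ≤ 3 ∧
          (T.1 j).1 < (T.1 j).2) ∧
       (∀ i : Fin a, 1 ≤ T.2 i ∧ T.2 i ≤ 3) ∧
       (∀ j j' : Fin b, j ≤ j' → (T.1 j).1 ≤ (T.1 j').1 ∧ (T.1 j).2 ≤ (T.1 j').2) ∧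
       (∀ i i' : Fin a, i ≤ i' → T.2 i ≤ T.2 i') ∧
       (∀ (j : Fin b) (i : Fin a), (T.1 j).1 ≤ T.2 i)}

/-- The set of `C2`-semistandard tableaux of shape `(a,b)`: entries from `{1,2,3,4}`,
rows weakly increasing, columns strictly increasing, no column equal to `(1,4)`,
and at most one column equal to `(2,3)`. -/
def SC2 (a b : ℕ) : Set (TabT a b) :=
  {T | (∀ j : Fin b, 1 ≤ (T.1 j).1 ∧ (T.1 j).1 ≤ 4 ∧ 1 ≤ (T.1 j).2 ∧ (T.1 j).2 ≤ 4 ∧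
          (T.1 j).1 < (T.1 j).2) ∧
       (∀ i : Fin a, 1 ≤ T.2 i ∧ T.2 i ≤ 4) ∧
       (∀ j j' : Fin b, j ≤ j' → (T.1 j).1 ≤ (T.1 j').1 ∧ (T.1 j).2 ≤ (T.1 j').2) ∧
       (∀ i i' : Fin a, i ≤ i' → T.2 i ≤ T.2 i') ∧
       (∀ (j : Fin b) (i : Fin a), (T.1 j).1 ≤ T.2 i) ∧
       (∀ j : Fin b, T.1 j ≠ (1, 4)) ∧
       (∀ j j' : Fin b, T.1 j = (2, 3) → T.1 j' = (2, 3) → j = j')}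

/-- The restrictions of Figure 4.5 on a pair of adjacent length-two columns of a
`G2`-semistandard tableau. -/
def g2pair2 (c c' : ℕ × ℕ) : Prop :=
  (c = (1, 4) → c' ≠ (1, 4) ∧ c' ≠ (1, 5) ∧ c' ≠ (1, 6) ∧ c' ≠ (1, 7)) ∧
  (c = (1, 5) → c' ≠ (1, 5) ∧ c' ≠ (1, 6) ∧ c' ≠ (1, 7)) ∧
  (c = (1, 6) → c' ≠ (1, 6) ∧ c' ≠ (1, 7) ∧ c' ≠ (2, 6) ∧ c' ≠ (2, 7)) ∧
  (c = (2, 6) → c' ≠ (2, 6) ∧ c' ≠ (2, 7)) ∧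
  (c = (1, 7) → c' ≠ (1, 7) ∧ c' ≠ (2, 7) ∧ c' ≠ (3, 7) ∧ c' ≠ (4, 7)) ∧
  (c = (2, 7) → c' ≠ (2, 7) ∧ c' ≠ (3, 7) ∧ c' ≠ (4, 7)) ∧
  (c = (3, 7) → c' ≠ (3, 7) ∧ c' ≠ (4, 7)) ∧
  (c = (4, 7) → c' ≠ (4, 7))

/-- The restrictions of Figure 4.5 on a length-two column followed by a
length-one column in a `G2`-semistandard tableau. -/
def g2pair1 (c : ℕ × ℕ) (e : ℕ) : Prop :=
  (c = (1, 4) → e ≠ 1) ∧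
  (c = (1, 5) → e ≠ 1) ∧
  (c = (1, 6) → e ≠ 1 ∧ e ≠ 2) ∧
  (c = (2, 6) → e ≠ 2) ∧
  (c = (1, 7) → e ≠ 1 ∧ e ≠ 2 ∧ e ≠ 3 ∧ e ≠ 4) ∧
  (c = (2, 7) → e ≠ 2 ∧ e ≠ 3 ∧ e ≠ 4) ∧
  (c = (3, 7) → e ≠ 3 ∧ e ≠ 4) ∧
  (c = (4, 7) → e ≠ 4)

/-- The set of `G2`-semistandard tableaux of shape `(a,b)`. -/
def SG2 (a b : ℕ) : Set (TabT a b) :=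
  {T | (∀ j : Fin b, 1 ≤ (T.1 j).1 ∧ (T.1 j).1 ≤ 7 ∧ 1 ≤ (T.1 j).2 ∧ (T.1 j).2 ≤ 7 ∧
          (T.1 j).1 < (T.1 j).2) ∧
       (∀ i : Fin a, 1 ≤ T.2 i ∧ T.2 i ≤ 7) ∧
       (∀ j j' : Fin b, j ≤ j' → (T.1 j).1 ≤ (T.1 j').1 ∧ (T.1 j).2 ≤ (T.1 j').2) ∧
       (∀ i i' : Fin a, i ≤ i' → T.2 i ≤ T.2 i') ∧
       (∀ (j : Fin b) (i : Fin a), (T.1 j).1 ≤ T.2 i) ∧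
       (∀ i i' : Fin a, T.2 i = 4 → T.2 i' = 4 → i = i') ∧
       (∀ j : Fin b, T.1 j ≠ (2, 3) ∧ T.1 j ≠ (2, 4) ∧ T.1 j ≠ (3, 4) ∧ T.1 j ≠ (3, 5) ∧
          T.1 j ≠ (4, 5) ∧ T.1 j ≠ (4, 6) ∧ T.1 j ≠ (5, 6)) ∧
       (∀ j j' : Fin b, (j' : ℕ) = (j : ℕ) + 1 → g2pair2 (T.1 j) (T.1 j')) ∧
       (∀ (j : Fin b) (i : Fin a), (j : ℕ) + 1 = b → (i : ℕ) = 0 → g2pair1 (T.1 j) (T.2 i))}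

/-- The monomial `x^p y^q` in the Laurent polynomial ring `ℤ[x,x⁻¹,y,y⁻¹]`,
realized as the group algebra of `ℤ × ℤ` over `ℤ`. -/
noncomputable def mm (p q : ℤ) : AddMonoidAlgebra ℤ (ℤ × ℤ) :=
  AddMonoidAlgebra.single (p, q) 1

/-! ### Tableaux as paths -/

/-- The entries allowed immediately to the right of the length-one column `e`: weakly larger
ones, with `4` not repeated. -/
def nxt (e : ℕ) : Finset ℕ := if e = 4 then Finset.Icc 5 7 else Finset.Icc e 7

/-- Rows of length `a` (in the sense of the length-one columns) whose first entry, if there is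
one, lies in `S`, built one entry at a time. -/
def rows : Finset ℕ → (a : ℕ) → Finset (Fin a → ℕ)
  | _, 0 => {Fin.elim0}
  | S, a + 1 => S.biUnion fun e =>
      (rows (nxt e) a).image fun f => (Fin.cons e f : Fin (a + 1) → ℕ)

/-- The conditions in `SG2` that concern only the length-one columns, together with the
requirement that the first entry lies in `S`. -/
def RowOK (S : Finset ℕ) {a : ℕ} (f : Fin a → ℕ) : Prop :=
  (∀ i, 1 ≤ f i ∧ f i ≤ 7) ∧ (∀ i i', i ≤ i' → f i ≤ f i') ∧
    (∀ i i', f i = 4 → f i' = 4 → i = i') ∧ (∀ i : Fin a, (i : ℕ) = 0 → f i ∈ S)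

lemma rowOK_cons {S : Finset ℕ} (hS : S ⊆ Finset.Icc 1 7) {a : ℕ} (e : ℕ) (f : Fin a → ℕ) :
    RowOK S (Fin.cons e f : Fin (a + 1) → ℕ) ↔ e ∈ S ∧ RowOK (nxt e) f := by
  constructor
  · rintro ⟨h1, h2, h3, h4⟩
    have he : e ∈ S := by simpa using h4 0 rfl
    refine ⟨he, fun i => by simpa using h1 i.succ, fun i i' h => ?_, fun i i' h h' => ?_,
      fun i hi => ?_⟩
    · simpa using h2 i.succ i'.succ (by simpa using h)
    · simpa using h3 i.succ i'.succ (by simpa using h) (by simpa using h')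
    · have a1 : 1 ≤ f i ∧ f i ≤ 7 := by simpa using h1 i.succ
      have a2 : e ≤ f i := by simpa using h2 0 i.succ (Fin.zero_le _)
      have a3 : e = 4 → f i ≠ 4 := fun h h' =>
        (Fin.succ_ne_zero i).symm (h3 0 i.succ (by simpa using h) (by simpa using h'))
      unfold nxt
      split_ifs with h
      · have := a3 h
        simp only [Finset.mem_Icc]; omega
      · simp only [Finset.mem_Icc]; omega
  · rintro ⟨he, h1, h2, h3, h4⟩
    have he7 := Finset.mem_Icc.1 (hS he)
    -- every entry of the tail dominates its first one, which lies in `nxt e`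
    have key : ∀ i, f i ∈ nxt e := by
      intro i
      have hpos : 0 < a := i.pos
      have b1 := h4 ⟨0, hpos⟩ rfl
      have b2 := h2 ⟨0, hpos⟩ i (Nat.zero_le _)
      have b3 := h1 i
      unfold nxt at b1 ⊢
      split_ifs at b1 ⊢ <;> simp only [Finset.mem_Icc] at b1 ⊢ <;> omega
    have key' : ∀ i, e ≤ f i ∧ (e = 4 → f i ≠ 4) := by
      intro i
      have b1 := key i
      unfold nxt at b1
      split_ifs at b1 <;> simp only [Finset.mem_Icc] at b1 <;> omega
    refine ⟨fun i => ?_, fun i i' => ?_, fun i i' => ?_, fun i => ?_⟩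
    · refine Fin.cases ?_ (fun i => ?_) i
      · simpa using he7
      · simpa using h1 i
    · refine Fin.cases ?_ (fun i => ?_) i <;> refine Fin.cases ?_ (fun i' => ?_) i'
      · simp
      · intro _
        simpa using (key' i').1
      · intro h
        simp at h
      · intro h
        simpa using h2 i i' (by simpa using h)
    · refine Fin.cases ?_ (fun i => ?_) i <;> refine Fin.cases ?_ (fun i' => ?_) i'
      · simp
      · intro h h'
        exact absurd (by simpa using h') ((key' i').2 (by simpa using h))
      · intro h h'
        exact absurd (by simpa using h) ((key' i).2 (by simpa using h'))
      · intro h h'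
        rw [h3 i i' (by simpa using h) (by simpa using h')]
    · refine Fin.cases ?_ (fun i => ?_) i
      · simpa using he
      · simp

lemma nxt_subset {e : ℕ} (he : 1 ≤ e) : nxt e ⊆ Finset.Icc 1 7 := by
  intro k hk
  unfold nxt at hk
  split_ifs at hk <;> simp only [Finset.mem_Icc] at hk ⊢ <;> omega

lemma mem_rows {a : ℕ} : ∀ {S : Finset ℕ}, S ⊆ Finset.Icc 1 7 → ∀ f : Fin a → ℕ,
    f ∈ rows S a ↔ RowOK S f := by
  induction a with
  | zero =>
    intro S _ f
    simp [rows, RowOK, Subsingleton.elim f Fin.elim0]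
  | succ a ih =>
    intro S hS f
    obtain ⟨e, f, rfl⟩ : ∃ e g, f = (Fin.cons e g : Fin (a + 1) → ℕ) :=
      ⟨f 0, Fin.tail f, (Fin.cons_self_tail f).symm⟩
    rw [rowOK_cons hS]
    simp only [rows, Finset.mem_biUnion, Finset.mem_image]
    constructor
    · rintro ⟨e', he', f', hf', h⟩
      obtain ⟨rfl, rfl⟩ := Fin.cons_injective2 h
      exact ⟨he', (ih (nxt_subset (Finset.mem_Icc.1 (hS he')).1) _).1 hf'⟩
    · rintro ⟨he, hf⟩
      exact ⟨e, he, f, (ih (nxt_subset (Finset.mem_Icc.1 (hS he)).1) _).2 hf, rfl⟩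

/-- The fourteen admissible length-two columns. -/
def cols : Finset (ℕ × ℕ) :=
  {(1, 2), (1, 3), (1, 4), (1, 5), (1, 6), (1, 7), (2, 5), (2, 6), (2, 7), (3, 6), (3, 7),
    (4, 7), (5, 7), (6, 7)}

set_option synthInstance.maxSize 2000 in
set_option synthInstance.maxHeartbeats 200000 in
instance : DecidableRel g2pair2 := fun c c' => by unfold g2pair2; infer_instance

instance : DecidableRel g2pair1 := fun c e => by unfold g2pair1; infer_instance

/-- The length-two columns allowed immediately to the right of the length-two column `c`. -/
def nxt2 (c : ℕ × ℕ) : Finset (ℕ × ℕ) :=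
  cols.filter fun c' => c.1 ≤ c'.1 ∧ c.2 ≤ c'.2 ∧ g2pair2 c c'

/-- The length-one columns allowed immediately to the right of the length-two column `c`. -/
def nxt1 (c : ℕ × ℕ) : Finset ℕ := (Finset.Icc c.1 7).filter fun e => g2pair1 c e

/-- Tableaux whose first column lies in `S` if it has length two and in `S'` if it has length
one, built one column at a time. -/
def tabs : Finset (ℕ × ℕ) → Finset ℕ → (b a : ℕ) → Finset (TabT a b)
  | _, S', 0, a => (rows S' a).image fun f => (Fin.elim0, f)
  | S, _, b + 1, a => S.biUnion fun c =>
      (tabs (nxt2 c) (nxt1 c) b a).image fun T => (Fin.cons c T.1, T.2)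

/-- The conditions of `SG2`, together with the requirement that the first column lies in `S`
if it has length two and in `S'` if it has length one. -/
def TabOK (S : Finset (ℕ × ℕ)) (S' : Finset ℕ) {a b : ℕ} (T : TabT a b) : Prop :=
  (∀ j, T.1 j ∈ cols) ∧
  (∀ j j' : Fin b, j ≤ j' → (T.1 j).1 ≤ (T.1 j').1 ∧ (T.1 j).2 ≤ (T.1 j').2) ∧
  (∀ j j' : Fin b, (j' : ℕ) = (j : ℕ) + 1 → g2pair2 (T.1 j) (T.1 j')) ∧
  (∀ j : Fin b, (j : ℕ) = 0 → T.1 j ∈ S) ∧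
  RowOK (Finset.Icc 1 7) T.2 ∧
  (b = 0 → ∀ i : Fin a, (i : ℕ) = 0 → T.2 i ∈ S') ∧
  (∀ (j : Fin b) (i : Fin a), (T.1 j).1 ≤ T.2 i) ∧
  (∀ (j : Fin b) (i : Fin a), (j : ℕ) + 1 = b → (i : ℕ) = 0 → g2pair1 (T.1 j) (T.2 i))

lemma tabOK_cons {S : Finset (ℕ × ℕ)} (hS : S ⊆ cols) (S' : Finset ℕ) {a b : ℕ}
    (c : ℕ × ℕ) (t : TabT a b) :
    TabOK S S' ((Fin.cons c t.1, t.2) : TabT a (b + 1)) ↔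
      c ∈ S ∧ TabOK (nxt2 c) (nxt1 c) t := by
  constructor
  · rintro ⟨h1, h2, h3, h4, h5, -, h7, h8⟩
    refine ⟨by simpa using h4 0 rfl, fun j => by simpa using h1 j.succ, fun j j' h => ?_,
      fun j j' h => ?_, fun j hj => ?_, h5, fun hb i hi => ?_, fun j i => ?_,
      fun j i hj hi => ?_⟩
    · simpa using h2 j.succ j'.succ (by simpa using h)
    · simpa using h3 j.succ j'.succ (by simpa using h)
    · have b1 := h1 j.succ
      have b2 := h2 0 j.succ (Fin.zero_le _)
      have b3 := h3 0 j.succ (by simp [hj])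
      simp only [Fin.cons_succ, Fin.cons_zero] at b1 b2 b3
      exact Finset.mem_filter.2 ⟨b1, b2.1, b2.2, b3⟩
    · have b1 := h7 0 i
      have b2 := h8 0 i (by simp [hb]) hi
      have b3 := h5.1 i
      simp only [Fin.cons_zero] at b1 b2
      exact Finset.mem_filter.2 ⟨Finset.mem_Icc.2 ⟨b1, b3.2⟩, b2⟩
    · simpa using h7 j.succ i
    · simpa using h8 j.succ i (by simp [hj]) hi
  · rintro ⟨hc, h1, h2, h3, h4, h5, h6, h7, h8⟩
    have k2 : ∀ j, c.1 ≤ (t.1 j).1 ∧ c.2 ≤ (t.1 j).2 := by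
      intro j
      have b1 := (Finset.mem_filter.1 (h4 ⟨0, j.pos⟩ rfl)).2
      have b2 := h2 ⟨0, j.pos⟩ j (Nat.zero_le _)
      exact ⟨b1.1.trans b2.1, b1.2.1.trans b2.2⟩
    have k7 : ∀ i, c.1 ≤ t.2 i := by
      intro i
      rcases Nat.eq_zero_or_pos b with hb | hb
      · have b1 := (Finset.mem_Icc.1 (Finset.mem_filter.1 (h6 hb ⟨0, i.pos⟩ rfl)).1).1
        exact b1.trans (h5.2.1 _ i (Nat.zero_le _))
      · exact (k2 ⟨0, hb⟩).1.trans (h7 _ i)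
    refine ⟨fun j => ?_, fun j j' => ?_, fun j j' => ?_, fun j => ?_, h5, by simp,
      fun j i => ?_, fun j i => ?_⟩
    · refine Fin.cases ?_ (fun j => ?_) j
      · simpa using hS hc
      · simpa using h1 j
    · refine Fin.cases ?_ (fun j => ?_) j <;> refine Fin.cases ?_ (fun j' => ?_) j'
      · simp
      · intro _
        simpa using k2 j'
      · intro h
        simp at h
      · intro h
        simpa using h2 j j' (by simpa using h)
    · refine Fin.cases ?_ (fun j => ?_) j <;> refine Fin.cases ?_ (fun j' => ?_) j'
      · simp
      · intro h
        have b1 := (Finset.mem_filter.1 (h4 j' (by simpa using h))).2.2.2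
        simpa using b1
      · simp
      · intro h
        simpa using h3 j j' (by simpa using h)
    · refine Fin.cases ?_ (fun j => ?_) j
      · simpa using hc
      · simp
    · refine Fin.cases ?_ (fun j => ?_) j
      · simpa using k7 i
      · simpa using h7 j i
    · refine Fin.cases ?_ (fun j => ?_) j
      · intro h hi
        have hb : b = 0 := by simpa using h.symm
        simpa using (Finset.mem_filter.1 (h6 hb i hi)).2
      · intro h hi
        simpa using h8 j i (by simpa using h) hi

lemma nxt2_subset (c : ℕ × ℕ) : nxt2 c ⊆ cols := Finset.filter_subset _ _

lemma nxt1_subset {c : ℕ × ℕ} (hc : c ∈ cols) : nxt1 c ⊆ Finset.Icc 1 7 := by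
  have h : ∀ c ∈ cols, 1 ≤ c.1 := by decide
  exact (Finset.filter_subset _ _).trans (Finset.Icc_subset_Icc_left (h c hc))

lemma mem_tabs {a b : ℕ} : ∀ {S : Finset (ℕ × ℕ)} {S' : Finset ℕ}, S ⊆ cols →
    S' ⊆ Finset.Icc 1 7 → ∀ T : TabT a b, T ∈ tabs S S' b a ↔ TabOK S S' T := by
  induction b with
  | zero =>
    rintro S S' - hS' ⟨c, f⟩
    have hc : c = Fin.elim0 := Subsingleton.elim _ _
    subst hc
    simp only [tabs, Finset.mem_image, Prod.mk.injEq, true_and, exists_eq_right, mem_rows hS']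
    constructor
    · intro h
      exact ⟨fun j => j.elim0, fun j => j.elim0, fun j => j.elim0, fun j => j.elim0,
        ⟨h.1, h.2.1, h.2.2.1, fun i _ => Finset.mem_Icc.2 (h.1 i)⟩, fun _ => h.2.2.2,
        fun j => j.elim0, fun j => j.elim0⟩
    · rintro ⟨-, -, -, -, h, h', -, -⟩
      exact ⟨h.1, h.2.1, h.2.2.1, h' rfl⟩
  | succ b ih =>
    rintro S S' hS - ⟨c, f⟩
    obtain ⟨c, g, rfl⟩ : ∃ c' g, c = (Fin.cons c' g : Fin (b + 1) → ℕ × ℕ) :=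
      ⟨c 0, Fin.tail c, (Fin.cons_self_tail c).symm⟩
    rw [tabOK_cons hS S' c (g, f)]
    simp only [tabs, Finset.mem_biUnion, Finset.mem_image]
    constructor
    · rintro ⟨c', hc', T', hT', h⟩
      obtain ⟨h, h2⟩ := Prod.mk.inj h
      obtain ⟨rfl, h1⟩ := Fin.cons_injective2 h
      obtain rfl : T' = (g, f) := Prod.ext h1 h2
      exact ⟨hc', (ih (nxt2_subset _) (nxt1_subset (hS hc')) _).1 hT'⟩
    · rintro ⟨hc, hT⟩
      exact ⟨c, hc, (g, f), (ih (nxt2_subset _) (nxt1_subset (hS hc)) _).2 hT, rfl⟩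

lemma mem_cols_iff (c : ℕ × ℕ) : c ∈ cols ↔
    (1 ≤ c.1 ∧ c.1 ≤ 7 ∧ 1 ≤ c.2 ∧ c.2 ≤ 7 ∧ c.1 < c.2) ∧
      (c ≠ (2, 3) ∧ c ≠ (2, 4) ∧ c ≠ (3, 4) ∧ c ≠ (3, 5) ∧ c ≠ (4, 5) ∧ c ≠ (4, 6) ∧
        c ≠ (5, 6)) := by
  constructor
  · revert c
    decide
  · obtain ⟨p, q⟩ := c
    rintro ⟨⟨h1, h2, h3, h4, h5⟩, h⟩
    simp only at h1 h2 h3 h4 h5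
    interval_cases p <;> interval_cases q <;> first | omega | decide | simp at h

lemma SG2_eq (a b : ℕ) : SG2 a b = ↑(tabs cols (Finset.Icc 1 7) b a) := by
  ext T
  rw [Finset.mem_coe, mem_tabs (Finset.Subset.refl _) (Finset.Subset.refl _)]
  constructor
  · rintro ⟨h1, h2, h3, h4, h5, h6, h7, h8, h9⟩
    have hc : ∀ j, T.1 j ∈ cols := fun j => (mem_cols_iff _).2 ⟨h1 j, h7 j⟩
    exact ⟨hc, h3, h8, fun j _ => hc j, ⟨h2, h4, h6, fun i _ => Finset.mem_Icc.2 (h2 i)⟩,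
      fun _ i _ => Finset.mem_Icc.2 (h2 i), h5, h9⟩
  · rintro ⟨h1, h3, h8, -, ⟨h2, h4, h6, -⟩, -, h5, h9⟩
    exact ⟨fun j => ((mem_cols_iff _).1 (h1 j)).1, h2, h3, h4, h5, h6,
      fun j => ((mem_cols_iff _).1 (h1 j)).2, h8, h9⟩

/-! ### Generating functions and their recursion -/

section GF

variable {R : Type*} [CommSemiring R] (w : ℕ → R)

/-- The generating function of `rows S a` when the entry `e` has weight `w e`. -/
def rowGF (S : Finset ℕ) (a : ℕ) : R := ∑ f ∈ rows S a, ∏ i, w (f i)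

/-- The generating function of `tabs S S' b a` when the entry `e` has weight `w e`. -/
def tabGF (S : Finset (ℕ × ℕ)) (S' : Finset ℕ) (b a : ℕ) : R :=
  ∑ T ∈ tabs S S' b a, (∏ j, w (T.1 j).1 * w (T.1 j).2) * ∏ i, w (T.2 i)

lemma rowGF_zero (S : Finset ℕ) : rowGF w S 0 = 1 := by
  simp [rowGF, rows]

lemma rowGF_succ (S : Finset ℕ) (a : ℕ) :
    rowGF w S (a + 1) = ∑ e ∈ S, w e * rowGF w (nxt e) a := by
  simp only [rowGF, rows]
  rw [Finset.sum_biUnion]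
  · refine Finset.sum_congr rfl fun e _ => ?_
    rw [Finset.sum_image fun f _ f' _ h => (Fin.cons_injective2 h).2, Finset.mul_sum]
    refine Finset.sum_congr rfl fun f _ => ?_
    rw [Fin.prod_univ_succ]
    simp
  · intro e _ e' _ hne
    rw [Function.onFun, Finset.disjoint_left]
    intro f hf hf'
    obtain ⟨g, -, rfl⟩ := Finset.mem_image.1 hf
    obtain ⟨g', -, h⟩ := Finset.mem_image.1 hf'
    exact hne (Fin.cons_injective2 h).1.symm

lemma tabGF_zero (S : Finset (ℕ × ℕ)) (S' : Finset ℕ) (a : ℕ) :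
    tabGF w S S' 0 a = rowGF w S' a := by
  simp only [tabGF, tabs, rowGF]
  rw [Finset.sum_image fun f _ f' _ h => (Prod.mk.inj h).2]
  simp

lemma tabGF_succ (S : Finset (ℕ × ℕ)) (S' : Finset ℕ) (b a : ℕ) :
    tabGF w S S' (b + 1) a = ∑ c ∈ S, w c.1 * w c.2 * tabGF w (nxt2 c) (nxt1 c) b a := by
  simp only [tabGF, tabs]
  rw [Finset.sum_biUnion]
  · refine Finset.sum_congr rfl fun c _ => ?_
    rw [Finset.sum_image, Finset.mul_sum]
    · refine Finset.sum_congr rfl fun T _ => ?_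
      rw [Fin.prod_univ_succ]
      simp [mul_assoc]
    · intro T _ T' _ h
      obtain ⟨h1, h2⟩ := Prod.mk.inj h
      exact Prod.ext (Fin.cons_injective2 h1).2 h2
  · intro c _ c' _ hne
    rw [Function.onFun, Finset.disjoint_left]
    intro T hT hT'
    obtain ⟨g, -, rfl⟩ := Finset.mem_image.1 hT
    obtain ⟨g', -, h⟩ := Finset.mem_image.1 hT'
    exact hne (Fin.cons_injective2 (Prod.mk.inj h).1).1.symm

end GF

lemma rowGF_Icc {R : Type*} [CommSemiring R] (w : ℕ → R) {k : ℕ} (hk : k ≤ 7) (a : ℕ) :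
    rowGF w (Finset.Icc k 7) (a + 1) =
      w k * rowGF w (nxt k) a + rowGF w (Finset.Icc (k + 1) 7) (a + 1) := by
  rw [rowGF_succ, rowGF_succ, ← Finset.insert_Icc_add_one_left_eq_Icc hk,
    Finset.sum_insert (by simp)]

lemma rowGF_empty {R : Type*} [CommSemiring R] (w : ℕ → R) (a : ℕ) :
    rowGF w ∅ (a + 1) = 0 := by
  rw [rowGF_succ, Finset.sum_empty]

lemma tabGF_insert {R : Type*} [CommSemiring R] (w : ℕ → R) {c : ℕ × ℕ}
    {S : Finset (ℕ × ℕ)} (hc : c ∉ S) {S' : Finset ℕ} {b a : ℕ} :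
    tabGF w (insert c S) S' (b + 1) a =
      w c.1 * w c.2 * tabGF w (nxt2 c) (nxt1 c) b a + tabGF w S S' (b + 1) a := by
  rw [tabGF_succ, tabGF_succ, Finset.sum_insert hc]

lemma tabGF_empty {R : Type*} [CommSemiring R] (w : ℕ → R) (S' : Finset ℕ) (b a : ℕ) :
    tabGF w ∅ S' (b + 1) a = 0 := by
  rw [tabGF_succ, Finset.sum_empty]

/-- The condition on a first column of length one is void when there is a column of length
two. -/
lemma tabGF_succ_eq {R : Type*} [CommSemiring R] (w : ℕ → R) (S : Finset (ℕ × ℕ))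
    (S' S'' : Finset ℕ) (b a : ℕ) : tabGF w S S' (b + 1) a = tabGF w S S'' (b + 1) a := by
  rw [tabGF_succ, tabGF_succ]

/-! ### Closed forms -/

section ClosedForms

variable {K : Type*} [Field K] {x y : K}

/-- The weights of the entries `1, …, 7`: the weights of the seven-dimensional representation,
in the variables `x` and `y`. The entry `4` has
weight `1`; entries outside `1, …, 7` never occur. -/
def wt (x y : K) : ℕ → K
  | 1 => x
  | 2 => y / x
  | 3 => x ^ 2 / y
  | 5 => y / x ^ 2
  | 6 => x / y
  | 7 => 1 / x
  | _ => 1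

/-- The columns that may follow `(6, 7)`, including `(6, 7)` itself. Together `colsFrom6`, …,
`colsFrom1` exhaust the values of `nxt2` on admissible columns. They are written as successive
insertions, so that `tabGF_insert` splits off one column at a time. -/
def colsFrom6 : Finset (ℕ × ℕ) := insert (6, 7) ∅

/-- The columns that may follow `(5, 7)`, including `(5, 7)` itself. -/
def colsFrom5 : Finset (ℕ × ℕ) := insert (5, 7) colsFrom6

/-- The columns that may follow `(3, 6)`, including `(3, 6)` itself. -/
def colsFrom4 : Finset (ℕ × ℕ) := insert (3, 6) (insert (3, 7) (insert (4, 7) colsFrom5))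

/-- The columns that may follow `(2, 5)`, including `(2, 5)` itself. -/
def colsFrom3 : Finset (ℕ × ℕ) := insert (2, 5) (insert (2, 6) (insert (2, 7) colsFrom4))

/-- The columns that may follow `(1, 3)`, including `(1, 3)` itself. -/
def colsFrom2 : Finset (ℕ × ℕ) :=
  insert (1, 3) (insert (1, 4) (insert (1, 5) (insert (1, 6) (insert (1, 7) colsFrom3))))

/-- The columns that may follow `(1, 2)`, including `(1, 2)` itself. -/
def colsFrom1 : Finset (ℕ × ℕ) := insert (1, 2) colsFrom2

/-! A row with entries at least `k` starts with `k` or has all entries at least `k + 1`; by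
`rowGF_Icc` and induction on `a`, the closed form for `k` follows from the one for `k + 1`. As `4`
cannot be repeated, `row4` needs no induction. The factors on the left are those `1 - e^{-α}`, over
positive roots `α`, which are needed to clear the denominators. In the inductive steps the powers
with exponent `a` are treated as independent variables. -/

lemma row7 (hx : x ≠ 0) (a : ℕ) :
    rowGF (wt x y) (Finset.Icc 7 7) a =
      (1 / x) ^ a := by
  induction a with
  | zero =>
    simp only [rowGF_zero, pow_zero]
  | succ a ih =>
    have hw : wt x y 7 = 1 / x := rfl
    rw [rowGF_Icc _ (by norm_num), show nxt 7 = Finset.Icc 7 7 from rfl, hw]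
    rw [show Finset.Icc (7 + 1) 7 = (∅ : Finset ℕ) from rfl, rowGF_empty]
    linear_combination (norm := (
      simp only [pow_succ]
      generalize (1 / x) ^ a = m7
      field_simp
      ring))
      (1 / x) * ih

lemma row6 (hx : x ≠ 0) (hy : y ≠ 0) (a : ℕ) :
    (1 - y / x ^ 2) * rowGF (wt x y) (Finset.Icc 6 7) a =
      (x / y) ^ a -
        (y / x ^ 2) * (1 / x) ^ a := by
  induction a with
  | zero =>
    simp only [rowGF_zero, pow_zero]
    field_simp
  | succ a ih =>
    have hw : wt x y 6 = x / y := rfl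
    rw [rowGF_Icc _ (by norm_num), show nxt 6 = Finset.Icc 6 7 from rfl, hw]
    rw [show 6 + 1 = 7 from rfl]
    linear_combination (norm := (
      simp only [pow_succ]
      generalize (x / y) ^ a = m6
      generalize (1 / x) ^ a = m7
      field_simp
      ring))
      (x / y) * ih +
      (1 - y / x ^ 2) * row7 hx (a + 1)

lemma row5 (hx : x ≠ 0) (hy : y ≠ 0) (a : ℕ) :
    (1 - y / x ^ 2) * (1 - x ^ 3 / y ^ 2) * (1 - x / y) *
      rowGF (wt x y) (Finset.Icc 5 7) a =
      (1 - y / x ^ 2) * (y / x ^ 2) ^ a +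
        (x ^ 4 / y ^ 3 - x ^ 3 / y ^ 2) * (x / y) ^ a +
        (1 / x - x ^ 2 / y ^ 2) * (1 / x) ^ a := by
  induction a with
  | zero =>
    simp only [rowGF_zero, pow_zero]
    field_simp
    ring
  | succ a ih =>
    have hw : wt x y 5 = y / x ^ 2 := rfl
    rw [rowGF_Icc _ (by norm_num), show nxt 5 = Finset.Icc 5 7 from rfl, hw]
    rw [show 5 + 1 = 6 from rfl]
    linear_combination (norm := (
      simp only [pow_succ]
      generalize (y / x ^ 2) ^ a = m5
      generalize (x / y) ^ a = m6
      generalize (1 / x) ^ a = m7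
      field_simp
      ring))
      (y / x ^ 2) * ih +
      (1 - x ^ 3 / y ^ 2) * (1 - x / y) * row6 hx hy (a + 1)

lemma row4 (hx : x ≠ 0) (hy : y ≠ 0) (a : ℕ) :
    (1 - y / x ^ 2) * (1 - x ^ 3 / y ^ 2) * (1 - x / y) *
      rowGF (wt x y) (Finset.Icc 4 7) a =
      (x ^ 2 / y - y / x ^ 2) * (y / x ^ 2) ^ a +
        (x ^ 4 / y ^ 3 - x ^ 2 / y) * (x / y) ^ a +
        (1 / x + 1 - x ^ 2 / y ^ 2 - x ^ 3 / y ^ 2) * (1 / x) ^ a := by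
  cases a with
  | zero =>
    simp only [rowGF_zero, pow_zero]
    field_simp
    ring
  | succ a =>
    have hw : wt x y 4 = 1 := rfl
    rw [rowGF_Icc _ (by norm_num), show nxt 4 = Finset.Icc 5 7 from rfl, hw]
    rw [show 4 + 1 = 5 from rfl]
    linear_combination (norm := (
      simp only [pow_succ]
      generalize (y / x ^ 2) ^ a = m5
      generalize (x / y) ^ a = m6
      generalize (1 / x) ^ a = m7
      field_simp
      ring))
      row5 hx hy a +
      row5 hx hy (a + 1)

lemma row3 (hx : x ≠ 0) (hy : y ≠ 0) (a : ℕ) :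
    (1 - y / x ^ 2) * (1 - x ^ 3 / y ^ 2) * (1 - x / y) * (1 - y / x ^ 3) *
      (1 - 1 / x) * rowGF (wt x y) (Finset.Icc 3 7) a =
      (1 + x ^ 4 / y ^ 3 - x / y - x ^ 3 / y ^ 2) * (x ^ 2 / y) ^ a +
        (y ^ 2 / x ^ 5 + y / x ^ 3 - y ^ 2 / x ^ 6 - y / x ^ 2) * (y / x ^ 2) ^ a +
        (1 / y ^ 2 + x / y - 1 / x ^ 2 - x ^ 3 / y ^ 3) * (x / y) ^ a +
        (y / x ^ 5 + 1 / y - y / x ^ 3 - 1 / (x ^ 2 * y)) * (1 / x) ^ a := by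
  induction a with
  | zero =>
    simp only [rowGF_zero, pow_zero]
    field_simp
    ring
  | succ a ih =>
    have hw : wt x y 3 = x ^ 2 / y := rfl
    rw [rowGF_Icc _ (by norm_num), show nxt 3 = Finset.Icc 3 7 from rfl, hw]
    rw [show 3 + 1 = 4 from rfl]
    linear_combination (norm := (
      simp only [pow_succ]
      generalize (x ^ 2 / y) ^ a = m3
      generalize (y / x ^ 2) ^ a = m5
      generalize (x / y) ^ a = m6
      generalize (1 / x) ^ a = m7
      field_simp
      ring))
      (x ^ 2 / y) * ih +
      (1 - y / x ^ 3) * (1 - 1 / x) * row4 hx hy (a + 1)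

lemma row2 (hx : x ≠ 0) (hy : y ≠ 0) (a : ℕ) :
    (1 - y / x ^ 2) * (1 - x ^ 3 / y ^ 2) * (1 - x / y) * (1 - y / x ^ 3) *
      (1 - 1 / x) * (1 - 1 / y) * rowGF (wt x y) (Finset.Icc 2 7) a =
      (y ^ 2 / x ^ 5 + 1 - y / x ^ 3 - y / x ^ 2) * (y / x) ^ a +
        (x ^ 3 / y ^ 3 + x ^ 4 / y ^ 3 - x ^ 3 / y ^ 2 - x ^ 4 / y ^ 4) * (x ^ 2 / y) ^ a +
        (y / x ^ 6 + y / x ^ 3 - y ^ 2 / x ^ 6 - 1 / x ^ 3) * (y / x ^ 2) ^ a +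
        (1 / y ^ 2 + x ^ 3 / y ^ 4 - 1 / y ^ 3 - x ^ 3 / y ^ 3) * (x / y) ^ a +
        (1 / x ^ 3 + 1 / (x ^ 2 * y ^ 2) - 1 / x ^ 5 - 1 / y ^ 2) * (1 / x) ^ a := by
  induction a with
  | zero =>
    simp only [rowGF_zero, pow_zero]
    field_simp
    ring
  | succ a ih =>
    have hw : wt x y 2 = y / x := rfl
    rw [rowGF_Icc _ (by norm_num), show nxt 2 = Finset.Icc 2 7 from rfl, hw]
    rw [show 2 + 1 = 3 from rfl]
    linear_combination (norm := (
      simp only [pow_succ]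
      generalize (y / x) ^ a = m2
      generalize (x ^ 2 / y) ^ a = m3
      generalize (y / x ^ 2) ^ a = m5
      generalize (x / y) ^ a = m6
      generalize (1 / x) ^ a = m7
      field_simp
      ring))
      (y / x) * ih +
      (1 - 1 / y) * row3 hx hy (a + 1)

lemma row1 (hx : x ≠ 0) (hy : y ≠ 0) (a : ℕ) :
    (1 - y / x ^ 2) * (1 - x ^ 3 / y ^ 2) * (1 - x / y) * (1 - y / x ^ 3) *
      (1 - 1 / x) * (1 - 1 / y) * rowGF (wt x y) (Finset.Icc 1 7) a =
      (1 - x ^ 3 / y ^ 2) * x ^ a +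
        (y ^ 2 / x ^ 5 - y / x ^ 2) * (y / x) ^ a +
        (x ^ 4 / y ^ 3 - x ^ 4 / y ^ 4) * (x ^ 2 / y) ^ a +
        (y / x ^ 6 - y ^ 2 / x ^ 6) * (y / x ^ 2) ^ a +
        (x ^ 3 / y ^ 4 - 1 / y ^ 3) * (x / y) ^ a +
        (1 / (x ^ 2 * y ^ 2) - 1 / x ^ 5) * (1 / x) ^ a := by
  induction a with
  | zero =>
    simp only [rowGF_zero, pow_zero]
    field_simp
    ring
  | succ a ih =>
    have hw : wt x y 1 = x := rfl
    rw [rowGF_Icc _ (by norm_num), show nxt 1 = Finset.Icc 1 7 from rfl, hw]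
    rw [show 1 + 1 = 2 from rfl]
    linear_combination (norm := (
      simp only [pow_succ]
      generalize x ^ a = m1
      generalize (y / x) ^ a = m2
      generalize (x ^ 2 / y) ^ a = m3
      generalize (y / x ^ 2) ^ a = m5
      generalize (x / y) ^ a = m6
      generalize (1 / x) ^ a = m7
      field_simp
      ring))
      x * ih +
      row2 hx hy (a + 1)

/-! In the same way `tabGF_insert` and the induction on `b` lead from `colsFrom(k+1)` to
`colsFrom k`; each column that is split off has as successors one of the sets `colsFrom j` and one
of the intervals `[i, 7]`. The case `b = 0` is a lemma about rows. -/

lemma tab6 (hx : x ≠ 0) (hy : y ≠ 0) (b a : ℕ) :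
    (1 - y / x ^ 2) * tabGF (wt x y) colsFrom6 (Finset.Icc 6 7) b a =
      (1 / y) ^ b * (x / y) ^ a -
        (y / x ^ 2) * (1 / y) ^ b * (1 / x) ^ a := by
  induction b with
  | zero =>
    rw [tabGF_zero]
    linear_combination (norm := (
      simp only [pow_zero]
      generalize (x / y) ^ a = m6
      generalize (1 / x) ^ a = m7
      field_simp
      ring))
      row6 hx hy a
  | succ b ih =>
    rw [colsFrom6, tabGF_insert _ (by decide), show nxt2 (6, 7) = colsFrom6 from by decide,
      show nxt1 (6, 7) = Finset.Icc 6 7 from by decide, tabGF_empty]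
    simp only [wt]
    linear_combination (norm := (
      simp only [pow_succ]
      generalize (1 / y) ^ b = l67
      generalize (x / y) ^ a = m6
      generalize (1 / x) ^ a = m7
      field_simp
      ring))
      (1 / y) * ih

lemma tab5 (hx : x ≠ 0) (hy : y ≠ 0) (b a : ℕ) :
    (1 - y / x ^ 2) * (1 - x ^ 3 / y ^ 2) * (1 - x / y) *
      tabGF (wt x y) colsFrom5 (Finset.Icc 5 7) b a =
      (1 - y / x ^ 2) * (y / x ^ 3) ^ b * (y / x ^ 2) ^ a +
        (1 / x - x / y) * (y / x ^ 3) ^ b * (1 / x) ^ a +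
        (x ^ 4 / y ^ 3 - x ^ 3 / y ^ 2) * (1 / y) ^ b * (x / y) ^ a +
        (x / y - x ^ 2 / y ^ 2) * (1 / y) ^ b * (1 / x) ^ a := by
  induction b with
  | zero =>
    rw [tabGF_zero]
    linear_combination (norm := (
      simp only [pow_zero]
      generalize (y / x ^ 2) ^ a = m5
      generalize (x / y) ^ a = m6
      generalize (1 / x) ^ a = m7
      field_simp
      ring))
      row5 hx hy a
  | succ b ih =>
    rw [colsFrom5, tabGF_insert _ (by decide), show nxt2 (5, 7) = colsFrom5 from by decide,
      show nxt1 (5, 7) = Finset.Icc 5 7 from by decide, tabGF_succ_eq _ _ _ (Finset.Icc 6 7)]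
    simp only [wt]
    linear_combination (norm := (
      simp only [pow_succ]
      generalize (y / x ^ 3) ^ b = l57
      generalize (1 / y) ^ b = l67
      generalize (y / x ^ 2) ^ a = m5
      generalize (x / y) ^ a = m6
      generalize (1 / x) ^ a = m7
      field_simp
      ring))
      (y / x ^ 3) * ih +
      (1 - x ^ 3 / y ^ 2) * (1 - x / y) * tab6 hx hy (b + 1) a

lemma tab4 (hx : x ≠ 0) (hy : y ≠ 0) (b a : ℕ) :
    (1 - y / x ^ 2) * (1 - x ^ 3 / y ^ 2) * (1 - x / y) * (1 - y / x ^ 3) *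
      (1 - 1 / x) * tabGF (wt x y) colsFrom4 (Finset.Icc 3 7) b a =
      (1 + x ^ 4 / y ^ 3 - x / y - x ^ 3 / y ^ 2) * (x ^ 3 / y ^ 2) ^ b * (x ^ 2 / y) ^ a +
        (1 / y + x ^ 2 / y ^ 2 - 1 / x - x ^ 3 / y ^ 3) * (x ^ 3 / y ^ 2) ^ b * (x / y) ^ a +
        (y ^ 2 / x ^ 5 + y / x ^ 3 - y ^ 2 / x ^ 6 - y / x ^ 2) * (y / x ^ 3) ^ b *
          (y / x ^ 2) ^ a +
        (y / x ^ 5 + 1 / x - y / x ^ 4 - 1 / x ^ 2) * (y / x ^ 3) ^ b * (1 / x) ^ a +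
        (1 / x + 1 / y ^ 2 + x / y - 1 / x ^ 2 - 1 / y - x ^ 2 / y ^ 2) * (1 / y) ^ b *
          (x / y) ^ a +
        (y / x ^ 4 + 1 / x ^ 2 + 1 / y - y / x ^ 3 - 1 / (x ^ 2 * y) - 1 / x) * (1 / y) ^ b *
          (1 / x) ^ a := by
  induction b with
  | zero =>
    rw [tabGF_zero]
    linear_combination (norm := (
      simp only [pow_zero]
      generalize (x ^ 2 / y) ^ a = m3
      generalize (y / x ^ 2) ^ a = m5
      generalize (x / y) ^ a = m6
      generalize (1 / x) ^ a = m7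
      field_simp
      ring))
      row3 hx hy a
  | succ b ih =>
    rw [colsFrom4, tabGF_insert _ (by decide), show nxt2 (3, 6) = colsFrom4 from by decide,
      show nxt1 (3, 6) = Finset.Icc 3 7 from by decide,
      tabGF_insert _ (by decide), show nxt2 (3, 7) = colsFrom5 from by decide,
      show nxt1 (3, 7) = Finset.Icc 5 7 from by decide,
      tabGF_insert _ (by decide), show nxt2 (4, 7) = colsFrom5 from by decide,
      show nxt1 (4, 7) = Finset.Icc 5 7 from by decide, tabGF_succ_eq _ _ _ (Finset.Icc 5 7)]
    simp only [wt]
    linear_combination (norm := (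
      simp only [pow_succ]
      generalize (x ^ 3 / y ^ 2) ^ b = l36
      generalize (y / x ^ 3) ^ b = l57
      generalize (1 / y) ^ b = l67
      generalize (x ^ 2 / y) ^ a = m3
      generalize (y / x ^ 2) ^ a = m5
      generalize (x / y) ^ a = m6
      generalize (1 / x) ^ a = m7
      field_simp
      ring))
      (x ^ 3 / y ^ 2) * ih +
      (x / y + 1 / x) * (1 - y / x ^ 3) * (1 - 1 / x) * tab5 hx hy b a +
      (1 - y / x ^ 3) * (1 - 1 / x) * tab5 hx hy (b + 1) a

lemma tab3 (hx : x ≠ 0) (hy : y ≠ 0) (b a : ℕ) :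
    (1 - y / x ^ 2) * (1 - x ^ 3 / y ^ 2) * (1 - x / y) * (1 - y / x ^ 3) *
      (1 - 1 / x) * (1 - 1 / y) * tabGF (wt x y) colsFrom3 (Finset.Icc 2 7) b a =
      (y ^ 2 / x ^ 5 + 1 - y / x ^ 3 - y / x ^ 2) * (y ^ 2 / x ^ 3) ^ b * (y / x) ^ a +
        (y / x ^ 4 + y / x ^ 3 - y ^ 2 / x ^ 6 - 1 / x) * (y ^ 2 / x ^ 3) ^ b * (y / x ^ 2) ^ a +
        (x ^ 3 / y ^ 3 + x ^ 4 / y ^ 3 - x ^ 3 / y ^ 2 - x ^ 4 / y ^ 4) * (x ^ 3 / y ^ 2) ^ b *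
          (x ^ 2 / y) ^ a +
        (x ^ 2 / y ^ 2 + x ^ 3 / y ^ 4 - x ^ 2 / y ^ 3 - x ^ 3 / y ^ 3) * (x ^ 3 / y ^ 2) ^ b *
          (x / y) ^ a +
        (y / x ^ 6 + 1 / x - y / x ^ 4 - 1 / x ^ 3) * (y / x ^ 3) ^ b * (y / x ^ 2) ^ a +
        (1 / x ^ 3 + 1 / (x ^ 2 * y) - 1 / x ^ 5 - 1 / y) * (y / x ^ 3) ^ b * (1 / x) ^ a +
        (1 / y ^ 2 + x ^ 2 / y ^ 3 - 1 / y ^ 3 - x ^ 2 / y ^ 2) * (1 / y) ^ b * (x / y) ^ a +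
        (1 / (x ^ 2 * y ^ 2) + 1 / y - 1 / (x ^ 2 * y) - 1 / y ^ 2) * (1 / y) ^ b *
          (1 / x) ^ a := by
  induction b with
  | zero =>
    rw [tabGF_zero]
    linear_combination (norm := (
      simp only [pow_zero]
      generalize (y / x) ^ a = m2
      generalize (x ^ 2 / y) ^ a = m3
      generalize (y / x ^ 2) ^ a = m5
      generalize (x / y) ^ a = m6
      generalize (1 / x) ^ a = m7
      field_simp
      ring))
      row2 hx hy a
  | succ b ih =>
    rw [colsFrom3, tabGF_insert _ (by decide), show nxt2 (2, 5) = colsFrom3 from by decide,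
      show nxt1 (2, 5) = Finset.Icc 2 7 from by decide,
      tabGF_insert _ (by decide), show nxt2 (2, 6) = colsFrom4 from by decide,
      show nxt1 (2, 6) = Finset.Icc 3 7 from by decide,
      tabGF_insert _ (by decide), show nxt2 (2, 7) = colsFrom5 from by decide,
      show nxt1 (2, 7) = Finset.Icc 5 7 from by decide, tabGF_succ_eq _ _ _ (Finset.Icc 3 7)]
    simp only [wt]
    linear_combination (norm := (
      simp only [pow_succ]
      generalize (y ^ 2 / x ^ 3) ^ b = l25
      generalize (x ^ 3 / y ^ 2) ^ b = l36
      generalize (y / x ^ 3) ^ b = l57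
      generalize (1 / y) ^ b = l67
      generalize (y / x) ^ a = m2
      generalize (x ^ 2 / y) ^ a = m3
      generalize (y / x ^ 2) ^ a = m5
      generalize (x / y) ^ a = m6
      generalize (1 / x) ^ a = m7
      field_simp
      ring))
      (y ^ 2 / x ^ 3) * ih +
      (1 - 1 / y) * tab4 hx hy b a +
      (y / x ^ 2) * (1 - y / x ^ 3) * (1 - 1 / x) * (1 - 1 / y) * tab5 hx hy b a +
      (1 - 1 / y) * tab4 hx hy (b + 1) a

lemma tab2 (hx : x ≠ 0) (hy : y ≠ 0) (b a : ℕ) :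
    (1 - y / x ^ 2) * (1 - x ^ 3 / y ^ 2) * (1 - x / y) * (1 - y / x ^ 3) *
      (1 - 1 / x) * (1 - 1 / y) * tabGF (wt x y) colsFrom2 (Finset.Icc 1 7) b a =
      (1 - x ^ 3 / y ^ 2) * (x ^ 3 / y) ^ b * x ^ a +
        (x ^ 4 / y ^ 3 - x / y) * (x ^ 3 / y) ^ b * (x ^ 2 / y) ^ a +
        (y ^ 2 / x ^ 5 - y / x ^ 2) * (y ^ 2 / x ^ 3) ^ b * (y / x) ^ a +
        (y / x ^ 3 - y ^ 2 / x ^ 6) * (y ^ 2 / x ^ 3) ^ b * (y / x ^ 2) ^ a +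
        (x / y - x ^ 4 / y ^ 4) * (x ^ 3 / y ^ 2) ^ b * (x ^ 2 / y) ^ a +
        (x ^ 3 / y ^ 4 - 1 / y) * (x ^ 3 / y ^ 2) ^ b * (x / y) ^ a +
        (y / x ^ 6 - y / x ^ 3) * (y / x ^ 3) ^ b * (y / x ^ 2) ^ a +
        (1 / x ^ 2 - 1 / x ^ 5) * (y / x ^ 3) ^ b * (1 / x) ^ a +
        (1 / y - 1 / y ^ 3) * (1 / y) ^ b * (x / y) ^ a +
        (1 / (x ^ 2 * y ^ 2) - 1 / x ^ 2) * (1 / y) ^ b * (1 / x) ^ a := by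
  induction b with
  | zero =>
    rw [tabGF_zero]
    linear_combination (norm := (
      simp only [pow_zero]
      generalize x ^ a = m1
      generalize (y / x) ^ a = m2
      generalize (x ^ 2 / y) ^ a = m3
      generalize (y / x ^ 2) ^ a = m5
      generalize (x / y) ^ a = m6
      generalize (1 / x) ^ a = m7
      field_simp
      ring))
      row1 hx hy a
  | succ b ih =>
    rw [colsFrom2, tabGF_insert _ (by decide), show nxt2 (1, 3) = colsFrom2 from by decide,
      show nxt1 (1, 3) = Finset.Icc 1 7 from by decide,
      tabGF_insert _ (by decide), show nxt2 (1, 4) = colsFrom3 from by decide,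
      show nxt1 (1, 4) = Finset.Icc 2 7 from by decide,
      tabGF_insert _ (by decide), show nxt2 (1, 5) = colsFrom3 from by decide,
      show nxt1 (1, 5) = Finset.Icc 2 7 from by decide,
      tabGF_insert _ (by decide), show nxt2 (1, 6) = colsFrom4 from by decide,
      show nxt1 (1, 6) = Finset.Icc 3 7 from by decide,
      tabGF_insert _ (by decide), show nxt2 (1, 7) = colsFrom5 from by decide,
      show nxt1 (1, 7) = Finset.Icc 5 7 from by decide, tabGF_succ_eq _ _ _ (Finset.Icc 2 7)]
    simp only [wt]
    linear_combination (norm := (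
      simp only [pow_succ]
      generalize (x ^ 3 / y) ^ b = l13
      generalize (y ^ 2 / x ^ 3) ^ b = l25
      generalize (x ^ 3 / y ^ 2) ^ b = l36
      generalize (y / x ^ 3) ^ b = l57
      generalize (1 / y) ^ b = l67
      generalize x ^ a = m1
      generalize (y / x) ^ a = m2
      generalize (x ^ 2 / y) ^ a = m3
      generalize (y / x ^ 2) ^ a = m5
      generalize (x / y) ^ a = m6
      generalize (1 / x) ^ a = m7
      field_simp
      ring))
      (x ^ 3 / y) * ih +
      (x + y / x) * tab3 hx hy b a +
      (x ^ 2 / y) * (1 - 1 / y) * tab4 hx hy b a +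
      (1 - y / x ^ 3) * (1 - 1 / x) * (1 - 1 / y) * tab5 hx hy b a +
      tab3 hx hy (b + 1) a

/-- The character formula over a field: dividing the Weyl numerator and denominator by `x * y`
leaves the product of the `1 - e^{-α}` and the sum below over the Weyl group. -/
lemma tab1 (hx : x ≠ 0) (hy : y ≠ 0) (b a : ℕ) :
    (1 - y / x ^ 2) * (1 - x ^ 3 / y ^ 2) * (1 - x / y) * (1 - y / x ^ 3) *
      (1 - 1 / x) * (1 - 1 / y) * tabGF (wt x y) colsFrom1 (Finset.Icc 1 7) b a =
      y ^ b * x ^ a -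
        (y / x ^ 2) * y ^ b * (y / x) ^ a -
        (x ^ 3 / y ^ 2) * (x ^ 3 / y) ^ b * x ^ a +
        (x ^ 4 / y ^ 3) * (x ^ 3 / y) ^ b * (x ^ 2 / y) ^ a +
        (y ^ 2 / x ^ 5) * (y ^ 2 / x ^ 3) ^ b * (y / x) ^ a -
        (y ^ 2 / x ^ 6) * (y ^ 2 / x ^ 3) ^ b * (y / x ^ 2) ^ a -
        (x ^ 4 / y ^ 4) * (x ^ 3 / y ^ 2) ^ b * (x ^ 2 / y) ^ a +
        (x ^ 3 / y ^ 4) * (x ^ 3 / y ^ 2) ^ b * (x / y) ^ a +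
        (y / x ^ 6) * (y / x ^ 3) ^ b * (y / x ^ 2) ^ a -
        (1 / x ^ 5) * (y / x ^ 3) ^ b * (1 / x) ^ a -
        (1 / y ^ 3) * (1 / y) ^ b * (x / y) ^ a +
        (1 / (x ^ 2 * y ^ 2)) * (1 / y) ^ b * (1 / x) ^ a := by
  induction b with
  | zero =>
    rw [tabGF_zero]
    linear_combination (norm := (
      simp only [pow_zero]
      generalize x ^ a = m1
      generalize (y / x) ^ a = m2
      generalize (x ^ 2 / y) ^ a = m3
      generalize (y / x ^ 2) ^ a = m5
      generalize (x / y) ^ a = m6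
      generalize (1 / x) ^ a = m7
      field_simp
      ring))
      row1 hx hy a
  | succ b ih =>
    rw [colsFrom1, tabGF_insert _ (by decide), show nxt2 (1, 2) = colsFrom1 from by decide,
      show nxt1 (1, 2) = Finset.Icc 1 7 from by decide, tabGF_succ_eq _ _ _ (Finset.Icc 1 7)]
    simp only [wt]
    linear_combination (norm := (
      simp only [pow_succ]
      generalize y ^ b = l12
      generalize (x ^ 3 / y) ^ b = l13
      generalize (y ^ 2 / x ^ 3) ^ b = l25
      generalize (x ^ 3 / y ^ 2) ^ b = l36
      generalize (y / x ^ 3) ^ b = l57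
      generalize (1 / y) ^ b = l67
      generalize x ^ a = m1
      generalize (y / x) ^ a = m2
      generalize (x ^ 2 / y) ^ a = m3
      generalize (y / x ^ 2) ^ a = m5
      generalize (x / y) ^ a = m6
      generalize (1 / x) ^ a = m7
      field_simp
      ring))
      y * ih +
      tab2 hx hy (b + 1) a

end ClosedForms

/-! ### Passage to the Laurent polynomial ring -/

/-- The exponent of the monomial attached to the entry `e`, as prescribed by the exponents
occurring in `G2_character`. -/
def ew (e : ℕ) : ℤ × ℤ :=
  ((if e = 1 then 1 else 0) - (if e = 2 then 1 else 0) + 2 * (if e = 3 then 1 else 0) -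
      2 * (if e = 5 then 1 else 0) + (if e = 6 then 1 else 0) - (if e = 7 then 1 else 0),
    (if e = 2 then 1 else 0) - (if e = 3 then 1 else 0) + (if e = 5 then 1 else 0) -
      (if e = 6 then 1 else 0))

lemma mm_mul (p q p' q' : ℤ) : mm p q * mm p' q' = mm (p + p') (q + q') := by
  simp [mm, AddMonoidAlgebra.single_mul_single]

lemma mm_zero : mm 0 0 = 1 := rfl

lemma mm_sum {ι : Type*} (s : Finset ι) (f : ι → ℤ × ℤ) :
    mm (∑ i ∈ s, f i).1 (∑ i ∈ s, f i).2 = ∏ i ∈ s, mm (f i).1 (f i).2 := by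
  classical
  induction s using Finset.induction_on with
  | empty => simp [mm_zero]
  | insert i s hi ih => rw [Finset.sum_insert hi, Finset.prod_insert hi, ← ih, mm_mul]; rfl

/-- The monomial of a tableau is the product of the monomials of its entries. -/
lemma mm_tableau {a b : ℕ} (T : TabT a b) :
    mm ((nkOf T 1 : ℤ) - (nkOf T 2 : ℤ) + 2 * (nkOf T 3 : ℤ) -
          2 * (nkOf T 5 : ℤ) + (nkOf T 6 : ℤ) - (nkOf T 7 : ℤ))
       ((nkOf T 2 : ℤ) - (nkOf T 3 : ℤ) + (nkOf T 5 : ℤ) - (nkOf T 6 : ℤ)) =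
      (∏ j, mm (ew (T.1 j).1).1 (ew (T.1 j).1).2 * mm (ew (T.1 j).2).1 (ew (T.1 j).2).2) *
        ∏ i, mm (ew (T.2 i)).1 (ew (T.2 i)).2 := by
  rw [Finset.prod_mul_distrib, ← mm_sum, ← mm_sum, ← mm_sum, mm_mul, mm_mul]
  congr 1 <;>
  · simp only [nkOf, Finset.card_filter, ew, Prod.fst_sum, Prod.snd_sum,
      Finset.sum_add_distrib, Finset.sum_sub_distrib, ← Finset.mul_sum]
    push_cast
    ring

/-- In a field containing the Laurent polynomial ring, monomials become honest products of
powers of `x = mm 1 0` and `y = mm 0 1`. -/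
lemma map_mm {K : Type*} [Field K] (φ : AddMonoidAlgebra ℤ (ℤ × ℤ) →+* K) (p q : ℤ) :
    φ (mm p q) = φ (mm 1 0) ^ p * φ (mm 0 1) ^ q := by
  have h : ∀ p q, φ (mm p q) * φ (mm (-p) (-q)) = 1 := fun p q => by
    rw [← map_mul, mm_mul, add_neg_cancel, add_neg_cancel, mm_zero, map_one]
  have hnat : ∀ (u v : ℤ) (n : ℕ), φ (mm (n * u) (n * v)) = φ (mm u v) ^ n := fun u v n => by
    induction n with
    | zero => simp [mm_zero]
    | succ n ih =>
      rw [pow_succ, ← ih, ← map_mul, mm_mul]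
      push_cast
      congr 2 <;> ring
  have hint : ∀ (u v n : ℤ), φ (mm (n * u) (n * v)) = φ (mm u v) ^ n := fun u v n => by
    obtain ⟨m, rfl | rfl⟩ := n.eq_nat_or_neg
    · rw [hnat, zpow_natCast]
    · rw [zpow_neg, zpow_natCast, ← hnat, neg_mul, neg_mul]
      exact eq_inv_of_mul_eq_one_right (h _ _)
  rw [← hint, ← hint, ← map_mul, mm_mul]
  congr 2 <;> ring

/-- The monomial of an entry becomes the weight used in the closed forms. -/
lemma map_mm_ew {K : Type*} [Field K] (φ : AddMonoidAlgebra ℤ (ℤ × ℤ) →+* K) (e : ℕ) :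
    φ (mm (ew e).1 (ew e).2) = wt (φ (mm 1 0)) (φ (mm 0 1)) e := by
  rw [map_mm]
  generalize φ (mm 1 0) = x
  generalize φ (mm 0 1) = y
  unfold wt
  split
  · simp [ew]
  · simp [ew]; ring
  · simp [ew, div_eq_mul_inv]
  · simp [ew]; ring
  · simp [ew]; ring
  · simp [ew]
  · simp_all [ew]

lemma colsFrom1_eq : colsFrom1 = cols := by decide

/-- Weyl's character formula for `G2`: the Weyl denominator times the weight
generating function of `S_G2(a,b)` equals the alternating Weyl numerator for
highest weight `a ω_α + b ω_β`. -/
theorem G2_character (a b : ℕ) :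
    (mm 1 1 - mm (-1) 2 - mm 4 (-1) + mm (-4) 3 + mm 5 (-2) - mm (-5) 3 -
          mm 5 (-3) + mm (-5) 2 + mm 4 (-3) - mm (-4) 1 - mm 1 (-2) + mm (-1) (-1)) *
        (∑ᶠ T ∈ SG2 a b,
          mm ((nkOf T 1 : ℤ) - (nkOf T 2 : ℤ) + 2 * (nkOf T 3 : ℤ) -
                2 * (nkOf T 5 : ℤ) + (nkOf T 6 : ℤ) - (nkOf T 7 : ℤ))
           ((nkOf T 2 : ℤ) - (nkOf T 3 : ℤ) + (nkOf T 5 : ℤ) - (nkOf T 6 : ℤ))) =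
      mm ((a : ℤ) + 1) ((b : ℤ) + 1) - mm (-((a : ℤ) + 1)) ((a : ℤ) + (b : ℤ) + 2) -
        mm ((a : ℤ) + 3 * (b : ℤ) + 4) (-((b : ℤ) + 1)) +
        mm (-((a : ℤ) + 3 * (b : ℤ) + 4)) ((a : ℤ) + 2 * (b : ℤ) + 3) +
        mm (2 * (a : ℤ) + 3 * (b : ℤ) + 5) (-((a : ℤ) + (b : ℤ) + 2)) -
        mm (-(2 * (a : ℤ) + 3 * (b : ℤ) + 5)) ((a : ℤ) + 2 * (b : ℤ) + 3) -
        mm (2 * (a : ℤ) + 3 * (b : ℤ) + 5) (-((a : ℤ) + 2 * (b : ℤ) + 3)) +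
        mm (-(2 * (a : ℤ) + 3 * (b : ℤ) + 5)) ((a : ℤ) + (b : ℤ) + 2) +
        mm ((a : ℤ) + 3 * (b : ℤ) + 4) (-((a : ℤ) + 2 * (b : ℤ) + 3)) -
        mm (-((a : ℤ) + 3 * (b : ℤ) + 4)) ((b : ℤ) + 1) -
        mm ((a : ℤ) + 1) (-((a : ℤ) + (b : ℤ) + 2)) +
        mm (-((a : ℤ) + 1)) (-((b : ℤ) + 1)) := by
  -- the group algebra of `ℤ × ℤ` is a domain, so the identity may be checked in its fraction field
  let φ := algebraMap (AddMonoidAlgebra ℤ (ℤ × ℤ)) (FractionRing (AddMonoidAlgebra ℤ (ℤ × ℤ)))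
  have hφ : Function.Injective φ := IsFractionRing.injective _ _
  apply hφ
  have hne : ∀ p q, φ (mm p q) ≠ 0 := fun p q h => by
    have h0 : mm p q = 0 := hφ (h.trans (map_zero φ).symm)
    simp [mm] at h0
  obtain ⟨x, hx⟩ : ∃ x, φ (mm 1 0) = x := ⟨_, rfl⟩
  obtain ⟨y, hy⟩ : ∃ y, φ (mm 0 1) = y := ⟨_, rfl⟩
  have hm : ∀ p q, φ (mm p q) = x ^ p * y ^ q := by rw [← hx, ← hy]; exact map_mm φ
  have hw : ∀ e, φ (mm (ew e).1 (ew e).2) = wt x y e := by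
    rw [← hx, ← hy]; exact map_mm_ew φ
  have hx0 : x ≠ 0 := hx ▸ hne 1 0
  have hy0 : y ≠ 0 := hy ▸ hne 0 1
  rw [SG2_eq, finsum_mem_coe_finset, map_mul, map_sum]
  simp only [mm_tableau, map_mul, map_prod, hw]
  have key := tab1 hx0 hy0 b a
  rw [colsFrom1_eq, tabGF] at key
  -- bring all exponents to sums of `a`, `b` and numerals, then make `x ^ a`, … independent
  have h2 : (2 : ℤ) * a = a + a := by ring
  have h2' : (2 : ℤ) * b = b + b := by ring
  have h3 : (3 : ℤ) * b = b + b + b := by ring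
  simp only [map_sub, map_add, hm, h2, h2', h3, zpow_neg, zpow_add₀ hx0, zpow_add₀ hy0,
    zpow_natCast, zpow_ofNat]
  simp only [div_pow, one_pow, ← pow_mul, mul_comm _ a, mul_comm _ b] at key
  simp only [pow_mul] at key
  linear_combination (norm := skip) x * y * key
  generalize (∑ T ∈ tabs cols (Finset.Icc 1 7) b a,
    (∏ j, wt x y (T.1 j).1 * wt x y (T.1 j).2) * ∏ i, wt x y (T.2 i)) = v
  have hA : x ^ a ≠ 0 := pow_ne_zero _ hx0
  have hB : x ^ b ≠ 0 := pow_ne_zero _ hx0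
  have hC : y ^ a ≠ 0 := pow_ne_zero _ hy0
  have hD : y ^ b ≠ 0 := pow_ne_zero _ hy0
  clear key
  generalize x ^ a = A at *
  generalize x ^ b = B at *
  generalize y ^ a = C at *
  generalize y ^ b = D at *
  field_simp
  ring
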